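/- arXiv:0901.2912 — 6 statements merged into one kernel-verified Lean document; each statement's English description precedes it below -/
import Mathlib

section
/- Let A be an m×n real matrix, let w ∈ ℝ^n have strictly positive entries, and let K ⊆ {1,…,n}. Suppose that every nonzero vector z in the null space of A satisfies Σ_{i∈K} w_i|z_i| < Σ_{i∉K} w_i|z_i|. Then every vector x ∈ ℝ^n whose support is contained in K is the unique minimizer of the weighted ℓ1 norm ‖·‖_{w,1} over the affine set {x' ∈ ℝ^n : A x' = A x}; that is, for every x' ≠ x with A x' = A x one has ‖x‖_{w,1} < ‖x'‖_{w,1}. -/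
section WeightedNorm

variable {ι : Type*} {E : ι → Type*} [∀ i, SeminormedAddCommGroup (E i)] {w : ι → ℝ}
  {K : Finset ι} {x : ∀ i, E i}

theorem sum_mul_norm_le_sum_mul_norm_add_sum_mul_norm_sub (hw : ∀ i ∈ K, 0 ≤ w i)
    (x x' : ∀ i, E i) :
    ∑ i ∈ K, w i * ‖x i‖ ≤ ∑ i ∈ K, w i * ‖x' i‖ + ∑ i ∈ K, w i * ‖x' i - x i‖ := by
  simp only [← Finset.sum_add_distrib, ← mul_add]
  gcongr with i hi
  · exact hw i hi
  · exact norm_le_norm_add_norm_sub (x' i) (x i)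

variable [Fintype ι] [DecidableEq ι]

theorem sum_mul_norm_add_sum_compl_le_of_eq_zero (hw : ∀ i ∈ K, 0 ≤ w i)
    (hx : ∀ i ∉ K, x i = 0) (x' : ∀ i, E i) :
    ∑ i, w i * ‖x i‖ + ∑ i ∈ Kᶜ, w i * ‖x' i - x i‖ ≤
      ∑ i, w i * ‖x' i‖ + ∑ i ∈ K, w i * ‖x' i - x i‖ := by
  have norm_x : ∑ i, w i * ‖x i‖ = ∑ i ∈ K, w i * ‖x i‖ :=
    (Finset.sum_subset K.subset_univ fun i _ hi ↦ by rw [hx i hi, norm_zero, mul_zero]).symm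
  have sub_off_K : ∑ i ∈ Kᶜ, w i * ‖x' i - x i‖ = ∑ i ∈ Kᶜ, w i * ‖x' i‖ :=
    Finset.sum_congr rfl fun i hi ↦ by rw [hx i (Finset.mem_compl.mp hi), sub_zero]
  calc ∑ i, w i * ‖x i‖ + ∑ i ∈ Kᶜ, w i * ‖x' i - x i‖
      = ∑ i ∈ K, w i * ‖x i‖ + ∑ i ∈ Kᶜ, w i * ‖x' i‖ := by rw [norm_x, sub_off_K]
    _ ≤ ∑ i ∈ K, w i * ‖x' i‖ + ∑ i ∈ K, w i * ‖x' i - x i‖ + ∑ i ∈ Kᶜ, w i * ‖x' i‖ := by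
      gcongr
      exact sum_mul_norm_le_sum_mul_norm_add_sum_mul_norm_sub hw x x'
    _ = ∑ i, w i * ‖x' i‖ + ∑ i ∈ K, w i * ‖x' i - x i‖ := by
      rw [add_right_comm, Finset.sum_add_sum_compl]

theorem weighted_l1_unique_recovery_of_strict_nullspace_condition_general
    {F : Type*} [AddGroup F] (A : (∀ i, E i) →+ F) (hw : ∀ i ∈ K, 0 ≤ w i)
    (hnull : ∀ z : ∀ i, E i, z ≠ 0 → A z = 0 →
      ∑ i ∈ K, w i * ‖z i‖ < ∑ i ∈ Kᶜ, w i * ‖z i‖)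
    (hx : ∀ i ∉ K, x i = 0) {x' : ∀ i, E i} (hne : x' ≠ x) (hA : A x' = A x) :
    ∑ i, w i * ‖x i‖ < ∑ i, w i * ‖x' i‖ := by
  have sub_mem_ker : A (x' - x) = 0 := by rw [map_sub, hA, sub_self]
  have null_lt : ∑ i ∈ K, w i * ‖x' i - x i‖ < ∑ i ∈ Kᶜ, w i * ‖x' i - x i‖ :=
    hnull (x' - x) (sub_ne_zero.mpr hne) sub_mem_ker
  linarith [sum_mul_norm_add_sum_compl_le_of_eq_zero hw hx x']

end WeightedNorm

/-- If every nonzero vector `z` in the null space of `A` satisfies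
`∑_{i∈K} w_i |z_i| < ∑_{i∉K} w_i |z_i|`, then every vector `x` supported on `K`
is the unique minimizer of the weighted ℓ1 norm over `{x' : A x' = A x}`. -/
theorem weighted_l1_unique_recovery_of_strict_nullspace_condition
    (m n : ℕ) (A : Matrix (Fin m) (Fin n) ℝ) (w : Fin n → ℝ)
    (hw : ∀ i, 0 < w i) (K : Finset (Fin n))
    (hnull : ∀ z : Fin n → ℝ, z ≠ 0 → A.mulVec z = 0 →
      ∑ i ∈ K, w i * |z i| < ∑ i ∈ Kᶜ, w i * |z i|) :
    ∀ x : Fin n → ℝ, (∀ i, x i ≠ 0 → i ∈ K) →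
      ∀ x' : Fin n → ℝ, x' ≠ x → A.mulVec x' = A.mulVec x →
        ∑ i, w i * |x i| < ∑ i, w i * |x' i| := by
  intro x hx x' hne hA
  exact weighted_l1_unique_recovery_of_strict_nullspace_condition_general
    A.mulVecLin.toAddMonoidHom (fun i _ ↦ (hw i).le) hnull (fun i ↦ not_imp_comm.mp (hx i)) hne hA
end

section
/- Let A be an m×n real matrix, let w ∈ ℝ^n have strictly positive entries, and let K ⊆ {1,…,n}. Suppose that every vector x ∈ ℝ^n whose support is contained in K is a minimizer (not necessarily unique) of the weighted ℓ1 norm ‖·‖_{w,1} over the affine set {x' : A x' = A x}. Then every vector z in the null space of A satisfies Σ_{i∈K} w_i|z_i| ≤ Σ_{i∉K} w_i|z_i|. -/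
/-!
Split a kernel vector `z` into its part `x` on `K` and its part `y` off `K`. Since `x + y = z`, the
vector `-y` has the same image as `x`, so minimality of `x` compares the cost of `z` on `K` with
the cost of `-y`, which is the cost of `z` off `K` because the cost is a sum of even functions of
the coordinates vanishing at `0`.
-/

section

variable {ι : Type*} [DecidableEq ι] {E : ι → Type*}

theorem piecewise_zero_add_piecewise_compl_zero [Fintype ι] [∀ i, AddZeroClass (E i)]
    (K : Finset ι) (z : ∀ i, E i) : K.piecewise z 0 + Kᶜ.piecewise z 0 = z := by
  ext i
  by_cases hi : i ∈ K <;> simp [hi]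

theorem mem_of_piecewise_zero_ne_zero [∀ i, Zero (E i)] {K : Finset ι} {z : ∀ i, E i} {i : ι}
    (h : K.piecewise z 0 i ≠ 0) : i ∈ K := by
  by_contra hi
  exact h (K.piecewise_eq_of_notMem z 0 hi)

theorem sum_piecewise_zero_of_map_zero [Fintype ι] [∀ i, Zero (E i)] {M : Type*} [AddCommMonoid M]
    {φ : ∀ i, E i → M} (hφ_zero : ∀ i, φ i 0 = 0) (K : Finset ι) (z : ∀ i, E i) :
    ∑ i, φ i (K.piecewise z 0 i) = ∑ i ∈ K, φ i (z i) := by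
  simp [Finset.piecewise, apply_ite, hφ_zero]

theorem map_neg_piecewise_compl_zero_of_map_eq_zero [Fintype ι] [∀ i, AddGroup (E i)]
    {F : Type*} [AddGroup F] (A : (∀ i, E i) →+ F) (K : Finset ι) {z : ∀ i, E i} (hz : A z = 0) :
    A (-Kᶜ.piecewise z 0) = A (K.piecewise z 0) := by
  have hsplit : A (K.piecewise z 0) + A (Kᶜ.piecewise z 0) = 0 := by
    rw [← map_add, piecewise_zero_add_piecewise_compl_zero, hz]
  rw [map_neg, eq_neg_of_add_eq_zero_left hsplit]

theorem nullspace_condition_of_weighted_l1_recovery_general [Fintype ι] [∀ i, AddGroup (E i)]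
    {F M : Type*} [AddGroup F] [AddCommMonoid M] [LE M] (A : (∀ i, E i) →+ F)
    (φ : ∀ i, E i → M) (hφ_zero : ∀ i, φ i 0 = 0) (hφ_even : ∀ i, (φ i).Even) (K : Finset ι)
    (hrec : ∀ x : ∀ i, E i, (∀ i, x i ≠ 0 → i ∈ K) →
      ∀ x' : ∀ i, E i, A x' = A x → ∑ i, φ i (x i) ≤ ∑ i, φ i (x' i))
    (z : ∀ i, E i) (hz : A z = 0) :
    ∑ i ∈ K, φ i (z i) ≤ ∑ i ∈ Kᶜ, φ i (z i) :=
  calc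
    ∑ i ∈ K, φ i (z i) = ∑ i, φ i (K.piecewise z 0 i) :=
      (sum_piecewise_zero_of_map_zero hφ_zero K z).symm
    _ ≤ ∑ i, φ i ((-Kᶜ.piecewise z 0) i) :=
      hrec _ (fun _ ↦ mem_of_piecewise_zero_ne_zero) _
        (map_neg_piecewise_compl_zero_of_map_eq_zero A K hz)
    _ = ∑ i, φ i (Kᶜ.piecewise z 0 i) := Finset.sum_congr rfl fun i _ ↦ hφ_even i _
    _ = ∑ i ∈ Kᶜ, φ i (z i) := sum_piecewise_zero_of_map_zero hφ_zero Kᶜ z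

end

/-- If every vector `x` supported on `K` is a (not necessarily unique)
minimizer of the weighted ℓ1 norm over `{x' : A x' = A x}`, then every vector `z`
in the null space of `A` satisfies `∑_{i∈K} w_i |z_i| ≤ ∑_{i∉K} w_i |z_i|`. -/
theorem nullspace_condition_of_weighted_l1_recovery
    (m n : ℕ) (A : Matrix (Fin m) (Fin n) ℝ) (w : Fin n → ℝ)
    (hw : ∀ i, 0 < w i) (K : Finset (Fin n))
    (hrec : ∀ x : Fin n → ℝ, (∀ i, x i ≠ 0 → i ∈ K) →
      ∀ x' : Fin n → ℝ, A.mulVec x' = A.mulVec x →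
        ∑ i, w i * |x i| ≤ ∑ i, w i * |x' i|) :
    ∀ z : Fin n → ℝ, A.mulVec z = 0 →
      ∑ i ∈ K, w i * |z i| ≤ ∑ i ∈ Kᶜ, w i * |z i| :=
  nullspace_condition_of_weighted_l1_recovery_general A.mulVecLin.toAddMonoidHom
    (fun i t ↦ w i * |t|) (by simp) (fun i t ↦ by simp) K hrec
end

section
/- Let 1 ≤ k < l, let w₁,…,w_l > 0, and set Ω = Σ_{p=1}^{k} w_p². Define the l×(l−k) real matrix A by A_{i,j} = −(1/Ω) w_i w_{k+j}² for 1 ≤ i ≤ k and 1 ≤ j ≤ l−k, A_{i,j} = w_i when k+1 ≤ i ≤ l and j = i−k, and A_{i,j} = 0 otherwise. Then det(AᵀA) = (Π_{q=k+1}^{l} w_q²) · (Ω + Σ_{q=k+1}^{l} w_q²)/Ω. In particular, if w_p takes the value W₁ for exactly t₁ of the indices p ∈ {k+1,…,l} and the value W₂ for the remaining t₂ = l−k−t₁ of them, then √(det(AᵀA)) = W₁^{t₁} W₂^{t₂} √((Ω + t₁W₁² + t₂W₂²)/Ω). -/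
open Matrix

/-! In block form, `A` is `B * diagonal v`, where `v` is the tail of `w` and `B` stacks the
rank-one matrix `-Ω⁻¹ u vᵀ` (`u` the head of `w`) on top of the identity. So
`det (Aᵀ A) = ∏ v² · det (Bᵀ B)`, and `Bᵀ B = 1 + Ω⁻¹ v vᵀ` is a rank-one perturbation of the
identity, of determinant `1 + Ω⁻¹ ∑ v²`. -/

theorem transpose_mul_self_submatrix_equiv {m n ι R : Type*} [Fintype m] [Fintype ι]
    [NonUnitalNonAssocSemiring R] (A : Matrix ι n R) (e : m ≃ ι) :
    (A.submatrix e id)ᵀ * A.submatrix e id = Aᵀ * A := by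
  rw [transpose_submatrix, submatrix_mul_equiv, submatrix_id_id]

theorem transpose_mul_self_fromRows_one {m n R : Type*} [Fintype m] [Fintype n] [DecidableEq n]
    [Semiring R] (C : Matrix m n R) :
    (fromRows C (1 : Matrix n n R))ᵀ * fromRows C (1 : Matrix n n R) = 1 + Cᵀ * C := by
  rw [transpose_fromRows, fromCols_mul_fromRows, transpose_one, Matrix.one_mul, add_comm]

section Gram

variable {m n R : Type*} [Fintype m] [Fintype n] [DecidableEq n] [CommRing R]

theorem det_one_add_vecMulVec (u v : n → R) : (1 + vecMulVec u v).det = 1 + u ⬝ᵥ v := by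
  rw [vecMulVec_eq Unit, det_one_add_replicateCol_mul_replicateRow, dotProduct_comm]

theorem det_transpose_mul_self_mul_diagonal (B : Matrix m n R) (v : n → R) :
    ((B * diagonal v)ᵀ * (B * diagonal v)).det = (∏ j, v j ^ 2) * (Bᵀ * B).det := by
  have gram_eq : (B * diagonal v)ᵀ * (B * diagonal v) = diagonal v * (Bᵀ * B) * diagonal v := by
    rw [transpose_mul, diagonal_transpose, Matrix.mul_assoc, Matrix.mul_assoc, Matrix.mul_assoc]
  rw [gram_eq, det_mul, det_mul, det_diagonal, Finset.prod_pow]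
  ring

theorem det_transpose_mul_self_fromRows_vecMulVec_one (u : m → R) (z : n → R) :
    ((fromRows (vecMulVec u z) (1 : Matrix n n R))ᵀ *
      fromRows (vecMulVec u z) (1 : Matrix n n R)).det = 1 + (u ⬝ᵥ u) * (z ⬝ᵥ z) := by
  rw [transpose_mul_self_fromRows_one, transpose_vecMulVec, vecMulVec_mul_vecMulVec,
    det_one_add_vecMulVec, dotProduct_smul, smul_eq_mul]

end Gram

section InternalAngleJacobian

variable {m n K : Type*} [Fintype m] [DecidableEq n] [Field K]

/-- The matrix of the change of variables in the derivation of the internal angle, with its rows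
split into those of the smaller face (weights `u`) and the remaining ones (weights `v`). -/
def internalAngleJacobian (u : m → K) (v : n → K) : Matrix (m ⊕ n) n K :=
  fromRows (of fun i j => -(1 / ∑ p, u p ^ 2) * u i * v j ^ 2) (diagonal v)

variable [Fintype n]

theorem internalAngleJacobian_eq_mul_diagonal (u : m → K) (v : n → K) :
    internalAngleJacobian u v =
      fromRows (vecMulVec (-(1 / ∑ p, u p ^ 2) • u) v) 1 * diagonal v := by
  rw [internalAngleJacobian, fromRows_mul, Matrix.one_mul]
  congr 1
  ext i j
  simp only [of_apply, mul_diagonal, vecMulVec_apply, Pi.smul_apply, smul_eq_mul]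
  ring

theorem det_transpose_mul_self_internalAngleJacobian (u : m → K) (v : n → K)
    (hu : ∑ p, u p ^ 2 ≠ 0) :
    ((internalAngleJacobian u v)ᵀ * internalAngleJacobian u v).det =
      (∏ q, v q ^ 2) * ((∑ p, u p ^ 2 + ∑ q, v q ^ 2) / ∑ p, u p ^ 2) := by
  have dotProduct_self_u : u ⬝ᵥ u = ∑ p, u p ^ 2 := by simp only [dotProduct, sq]
  have dotProduct_self_v : v ⬝ᵥ v = ∑ q, v q ^ 2 := by simp only [dotProduct, sq]
  rw [internalAngleJacobian_eq_mul_diagonal, det_transpose_mul_self_mul_diagonal,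
    det_transpose_mul_self_fromRows_vecMulVec_one, smul_dotProduct, dotProduct_smul,
    dotProduct_self_u, dotProduct_self_v, smul_eq_mul, smul_eq_mul]
  field_simp

end InternalAngleJacobian

section HeadTail

variable {k l : ℕ}

/-- The splitting of `Fin l` into its first `k` indices and the remaining `l - k` ones; it matches
the indices of a weight vector with the two blocks of rows of `internalAngleJacobian`. -/
def finHeadTailEquiv (h : k ≤ l) : Fin k ⊕ Fin (l - k) ≃ Fin l :=
  finSumFinEquiv.trans (finCongr (Nat.add_sub_of_le h))

@[simp]
theorem val_finHeadTailEquiv_inl (h : k ≤ l) (i : Fin k) :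
    (finHeadTailEquiv h (.inl i) : ℕ) = i := rfl

@[simp]
theorem val_finHeadTailEquiv_inr (h : k ≤ l) (j : Fin (l - k)) :
    (finHeadTailEquiv h (.inr j) : ℕ) = k + j := rfl

variable {M : Type*} [CommMonoid M]

@[to_additive]
theorem prod_filter_val_lt (h : k ≤ l) (f : Fin l → M) :
    ∏ p : Fin l with p.val < k, f p = ∏ i, f (finHeadTailEquiv h (.inl i)) := by
  rw [Finset.prod_filter, ← (finHeadTailEquiv h).prod_comp, Fintype.prod_sum_type]
  simp

@[to_additive]
theorem prod_filter_le_val (h : k ≤ l) (f : Fin l → M) :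
    ∏ q : Fin l with k ≤ q.val, f q = ∏ j, f (finHeadTailEquiv h (.inr j)) := by
  rw [Finset.prod_filter, ← (finHeadTailEquiv h).prod_comp, Fintype.prod_sum_type]
  simp [fun i : Fin k => i.isLt.not_ge]

theorem card_filter_le_val (h : k ≤ l) :
    (Finset.univ.filter fun q : Fin l => k ≤ (q : ℕ)).card = l - k := by
  rw [Finset.card_eq_sum_ones, sum_filter_le_val h]
  simp

end HeadTail

@[to_additive sum_eq_card_nsmul_add_card_sdiff_nsmul]
theorem prod_eq_pow_card_mul_pow_card_sdiff {ι M : Type*} [DecidableEq ι] [CommMonoid M]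
    {S T : Finset ι} (hST : S ⊆ T) {f : ι → M} {a b : M}
    (ha : ∀ q ∈ S, f q = a) (hb : ∀ q ∈ T \ S, f q = b) :
    ∏ q ∈ T, f q = a ^ S.card * b ^ (T \ S).card := by
  rw [← Finset.prod_sdiff hST, Finset.prod_eq_pow_card ha, Finset.prod_eq_pow_card hb, mul_comm]

section FinIndexed

variable {K : Type*} [Field K] {k l : ℕ} {w : Fin l → K} {Ω : K}
  {A : Matrix (Fin l) (Fin (l - k)) K}

theorem submatrix_finHeadTailEquiv_eq_internalAngleJacobian (hkl : k ≤ l)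
    (hΩ : Ω = ∑ p : Fin l with p.val < k, w p ^ 2)
    (hA : ∀ (i : Fin l) (j : Fin (l - k)),
      A i j = if (i : ℕ) < k then -(1 / Ω) * w i * w ⟨k + (j : ℕ), by omega⟩ ^ 2
        else if (i : ℕ) = k + (j : ℕ) then w i else 0) :
    A.submatrix (finHeadTailEquiv hkl) id =
      internalAngleJacobian (fun i => w (finHeadTailEquiv hkl (.inl i)))
        (fun j => w (finHeadTailEquiv hkl (.inr j))) := by
  rw [sum_filter_val_lt hkl] at hΩ
  ext (i | i) j
  · rw [submatrix_apply, hA, val_finHeadTailEquiv_inl, if_pos i.isLt, hΩ]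
    rfl
  · simp [hA, internalAngleJacobian, diagonal_apply, Fin.ext_iff]

theorem det_transpose_mul_self_eq_prod_mul_div (hkl : k ≤ l)
    (hΩ : Ω = ∑ p : Fin l with p.val < k, w p ^ 2) (hΩ_ne : Ω ≠ 0)
    (hA : ∀ (i : Fin l) (j : Fin (l - k)),
      A i j = if (i : ℕ) < k then -(1 / Ω) * w i * w ⟨k + (j : ℕ), by omega⟩ ^ 2
        else if (i : ℕ) = k + (j : ℕ) then w i else 0) :
    (Aᵀ * A).det = (∏ q : Fin l with k ≤ q.val, w q ^ 2) *
      ((Ω + ∑ q : Fin l with k ≤ q.val, w q ^ 2) / Ω) := by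
  have hA_blocks := submatrix_finHeadTailEquiv_eq_internalAngleJacobian hkl hΩ hA
  rw [sum_filter_val_lt hkl] at hΩ
  rw [← transpose_mul_self_submatrix_equiv A (finHeadTailEquiv hkl), hA_blocks,
    det_transpose_mul_self_internalAngleJacobian _ _ (hΩ ▸ hΩ_ne), ← hΩ, prod_filter_le_val hkl,
    sum_filter_le_val hkl]

end FinIndexed

theorem sqrt_prod_sq_mul_of_two_values {ι : Type*} [DecidableEq ι] {S T : Finset ι} (hST : S ⊆ T)
    {w : ι → ℝ} (hw : ∀ q ∈ T, 0 ≤ w q) {W₁ W₂ : ℝ} (hW₁ : ∀ q ∈ S, w q = W₁)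
    (hW₂ : ∀ q ∈ T \ S, w q = W₂) (Ω : ℝ) :
    √((∏ q ∈ T, w q ^ 2) * ((Ω + ∑ q ∈ T, w q ^ 2) / Ω)) =
      W₁ ^ S.card * W₂ ^ (T \ S).card *
        √((Ω + S.card * W₁ ^ 2 + (T \ S).card * W₂ ^ 2) / Ω) := by
  have sum_sq : ∑ q ∈ T, w q ^ 2 = S.card * W₁ ^ 2 + (T \ S).card * W₂ ^ 2 := by
    rw [sum_eq_card_nsmul_add_card_sdiff_nsmul hST (fun q hq => congrArg (· ^ 2) (hW₁ q hq))
      (fun q hq => congrArg (· ^ 2) (hW₂ q hq)), nsmul_eq_mul, nsmul_eq_mul]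
  rw [Finset.prod_pow, Real.sqrt_mul (sq_nonneg _), Real.sqrt_sq (Finset.prod_nonneg hw),
    prod_eq_pow_card_mul_pow_card_sdiff hST hW₁ hW₂, sum_sq, add_assoc]

/-- The Jacobian determinant of the change of variables in the internal
angle derivation: `det(AᵀA) = (∏_{q>k} w_q²)·(Ω + ∑_{q>k} w_q²)/Ω`, and its specialization
when the weights on `{k+1,…,l}` take only two values `W₁` (on `t₁` indices) and `W₂`
(on the remaining `t₂ = l−k−t₁` indices). -/
theorem jacobian_determinant_internal_angle
    (k l : ℕ) (hk : 1 ≤ k) (hkl : k < l)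
    (w : Fin l → ℝ) (hw : ∀ i, 0 < w i)
    (Ω : ℝ) (hΩ : Ω = ∑ p ∈ Finset.univ.filter (fun p : Fin l => (p : ℕ) < k), (w p) ^ 2)
    (A : Matrix (Fin l) (Fin (l - k)) ℝ)
    (hA : ∀ (i : Fin l) (j : Fin (l - k)),
      A i j = if (i : ℕ) < k then -(1 / Ω) * w i * (w ⟨k + (j : ℕ), by omega⟩) ^ 2
        else if (i : ℕ) = k + (j : ℕ) then w i else 0) :
    (Aᵀ * A).det =
      (∏ q ∈ Finset.univ.filter (fun q : Fin l => k ≤ (q : ℕ)), (w q) ^ 2) *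
        ((Ω + ∑ q ∈ Finset.univ.filter (fun q : Fin l => k ≤ (q : ℕ)), (w q) ^ 2) / Ω) ∧
    ∀ (W₁ W₂ : ℝ) (t₁ t₂ : ℕ) (S : Finset (Fin l)),
      (∀ q ∈ S, k ≤ (q : ℕ)) → S.card = t₁ → t₁ + t₂ = l - k →
      (∀ q : Fin l, k ≤ (q : ℕ) → (q ∈ S → w q = W₁) ∧ (q ∉ S → w q = W₂)) →
      Real.sqrt (Aᵀ * A).det =
        W₁ ^ t₁ * W₂ ^ t₂ * Real.sqrt ((Ω + t₁ * W₁ ^ 2 + t₂ * W₂ ^ 2) / Ω) := by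
  have hΩ_pos : 0 < Ω := hΩ ▸ Finset.sum_pos (fun p _ => pow_pos (hw p) 2)
    ⟨⟨0, by omega⟩, Finset.mem_filter.mpr ⟨Finset.mem_univ _, hk⟩⟩
  have hdet := det_transpose_mul_self_eq_prod_mul_div hkl.le hΩ hΩ_pos.ne' hA
  refine ⟨hdet, fun W₁ W₂ t₁ t₂ S hS hSt₁ ht hW => ?_⟩
  set T := Finset.univ.filter fun q : Fin l => k ≤ (q : ℕ)
  have hST : S ⊆ T := fun q hq => Finset.mem_filter.mpr ⟨Finset.mem_univ q, hS q hq⟩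
  have hTSt₂ : (T \ S).card = t₂ := by
    rw [Finset.card_sdiff_of_subset hST, card_filter_le_val hkl.le]
    omega
  have hW₂ : ∀ q ∈ T \ S, w q = W₂ := fun q hq =>
    have ⟨hqT, hqS⟩ := Finset.mem_sdiff.mp hq
    (hW q (Finset.mem_filter.mp hqT).2).2 hqS
  rw [hdet, sqrt_prod_sq_mul_of_two_values hST (fun q _ => (hw q).le)
    (fun q hq => (hW q (hS q hq)).1 hq) hW₂, hSt₁, hTSt₂]
end

section
/- Let d ≥ 1, r ≥ 1, n = d + r, and let w₁,…,w_n > 0. For each sign vector j = (j₁,…,j_d) ∈ {−1,1}^d define v_j = Σ_{i=1}^{d} j_i w_i e_i + Σ_{i=d+1}^{n} w_i e_i ∈ ℝ^n, where e_i are the standard basis vectors. Then the positive hull (the set of all finite nonnegative linear combinations) of the 2^d vectors {v_j : j ∈ {−1,1}^d} equals the set {y ∈ ℝ^n : there exists t ≥ 0 such that y_i = w_i t for all i > d and |y_i| ≤ w_i t for all i ≤ d}. -/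
/-!
The positive hull of a finite family of points is the union of the dilates, by factors `t ≥ 0`, of
its convex hull. The normals `v_j` are exactly the vertices of the (degenerate) box with opposite
corners `v_{(-1,…,-1)}` and `v_{(1,…,1)}`, so their convex hull is that box. The `t`-dilate of the
box is cut out by `y_i = w_i t` for `i > d` and `|y_i| ≤ w_i t` for `i ≤ d`.
-/

open Set
open scoped Pointwise

section ConvexHull

variable {𝕜 : Type*} [Field 𝕜] [LinearOrder 𝕜] [IsStrictOrderedRing 𝕜]

section PositiveHull

variable {E κ : Type*} [AddCommGroup E] [Module 𝕜 E] [Fintype κ]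

theorem convexHull_range_eq_image_stdSimplex (p : κ → E) :
    convexHull 𝕜 (range p) = Fintype.linearCombination 𝕜 p '' stdSimplex 𝕜 κ := by
  classical
  rw [← convexHull_rangle_single_eq_stdSimplex, LinearMap.image_convexHull, ← range_comp]
  congr 2
  ext k
  simp

theorem sum_smul_mem_sum_smul_convexHull_range [Nonempty κ] {c : κ → 𝕜} (hc : ∀ k, 0 ≤ c k)
    (p : κ → E) : ∑ k, c k • p k ∈ (∑ k, c k) • convexHull 𝕜 (range p) := by
  rcases (Fintype.sum_nonneg hc).eq_or_lt with hsum | hsum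
  · have hc_zero : c = 0 := (Fintype.sum_eq_zero_iff_of_nonneg hc).mp hsum.symm
    have hhull : (convexHull 𝕜 (range p)).Nonempty := (range_nonempty p).convexHull
    simp [hc_zero, zero_smul_set hhull]
  · have hmem : Finset.univ.centerMass c p ∈ convexHull 𝕜 (range p) :=
      Finset.univ.centerMass_mem_convexHull (fun k _ => hc k) hsum fun k _ => mem_range_self k
    exact ⟨_, hmem, smul_inv_smul₀ hsum.ne' _⟩

theorem exists_nonneg_eq_sum_smul_iff_exists_mem_smul_convexHull [Nonempty κ]
    {p : κ → E} {y : E} :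
    (∃ c : κ → 𝕜, (∀ k, 0 ≤ c k) ∧ y = ∑ k, c k • p k) ↔
      ∃ t : 𝕜, 0 ≤ t ∧ y ∈ t • convexHull 𝕜 (range p) := by
  constructor
  · rintro ⟨c, hc, rfl⟩
    exact ⟨∑ k, c k, Fintype.sum_nonneg hc, sum_smul_mem_sum_smul_convexHull_range hc p⟩
  · rw [convexHull_range_eq_image_stdSimplex]
    rintro ⟨t, ht, _, ⟨c, hc, rfl⟩, rfl⟩
    refine ⟨t • c, fun k => mul_nonneg ht (hc.1 k), ?_⟩
    simp [Fintype.linearCombination_apply, Finset.smul_sum, mul_smul]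

end PositiveHull

section Box

variable {ι : Type*}

theorem convexHull_pi_pair [Finite ι] {a b : ι → 𝕜} (hab : a ≤ b) :
    convexHull 𝕜 (univ.pi fun i => {a i, b i}) = Icc a b := by
  simp only [convexHull_pi, convexHull_pair, segment_eq_Icc (hab _), pi_univ_Icc]

theorem smul_Icc_of_nonneg {a b : ι → 𝕜} (hab : a ≤ b) {t : 𝕜} (ht : 0 ≤ t) :
    t • Icc a b = Icc (t • a) (t • b) := by
  rw [← pi_univ_Icc, ← pi_univ_Icc, smul_univ_pi]
  refine pi_congr rfl fun i _ => ?_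
  rcases ht.eq_or_lt with rfl | ht
  · simp [zero_smul_set (nonempty_Icc.mpr (hab i)), ← singleton_zero]
  · exact LinearOrderedField.smul_Icc ht

end Box

end ConvexHull

section OutwardNormal

variable {𝕜 : Type*} {d n : ℕ}

section Ring

variable [Ring 𝕜]

/-- The vector of signs encoded by `s`, where `true` stands for `1` and `false` for `-1`. -/
def signVector {ι : Type*} (𝕜 : Type*) [Ring 𝕜] (s : ι → Bool) : ι → 𝕜 :=
  fun i => if s i then 1 else -1

/-- The vector `v_j = ∑_{i ≤ d} j_i w_i e_i + ∑_{i > d} w_i e_i`. For a sign vector `j` it is an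
outward normal of a facet of the weighted cross-polytope `∑ i, w_i |y_i| ≤ 1`. With indices
starting at `0`, the coordinates `i ≤ d` are those with `(i : ℕ) < d`. -/
def outwardNormal (w : Fin n → 𝕜) (j : Fin d → 𝕜) : Fin n → 𝕜 :=
  fun i => if h : (i : ℕ) < d then j ⟨i, h⟩ * w i else w i

theorem outwardNormal_of_lt (w : Fin n → 𝕜) (j : Fin d → 𝕜) {i : Fin n} (hi : (i : ℕ) < d) :
    outwardNormal w j i = j ⟨i, hi⟩ * w i :=
  dif_pos hi

theorem outwardNormal_of_le (w : Fin n → 𝕜) (j : Fin d → 𝕜) {i : Fin n} (hi : d ≤ (i : ℕ)) :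
    outwardNormal w j i = w i :=
  dif_neg hi.not_gt

theorem range_outwardNormal_signVector (w : Fin n → 𝕜) :
    range (fun s : Fin d → Bool => outwardNormal w (signVector 𝕜 s)) =
      univ.pi fun i => {outwardNormal w (-1 : Fin d → 𝕜) i, outwardNormal w (1 : Fin d → 𝕜) i} := by
  classical
  ext y
  simp only [mem_range, mem_univ_pi, mem_insert_iff, mem_singleton_iff]
  constructor
  · rintro ⟨s, rfl⟩ i
    unfold outwardNormal signVector
    split_ifs <;> simp
  · intro hy
    refine ⟨fun k => decide (∃ h : (k : ℕ) < n, y ⟨k, h⟩ = w ⟨k, h⟩), funext fun i => ?_⟩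
    rcases lt_or_ge (i : ℕ) d with hi | hi
    · have hyi : y i = -w i ∨ y i = w i := by simpa [outwardNormal_of_lt _ _ hi] using hy i
      by_cases hpos : y i = w i
      · simp [outwardNormal_of_lt _ _ hi, signVector, hpos]
      · simpa [outwardNormal_of_lt _ _ hi, signVector, hpos] using (hyi.resolve_right hpos).symm
    · simpa [outwardNormal_of_le _ _ hi, eq_comm] using hy i

end Ring

theorem outwardNormal_mono [Ring 𝕜] [PartialOrder 𝕜] [IsOrderedRing 𝕜] {w : Fin n → 𝕜}
    (hw : ∀ i, 0 ≤ w i) :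
    Monotone (outwardNormal w : (Fin d → 𝕜) → Fin n → 𝕜) := by
  intro j k hjk i
  rcases lt_or_ge (i : ℕ) d with hi | hi
  · simpa only [outwardNormal_of_lt _ _ hi] using
      mul_le_mul_of_nonneg_right (hjk ⟨i, hi⟩) (hw i)
  · simp only [outwardNormal_of_le _ _ hi, le_refl]

theorem mem_Icc_smul_outwardNormal_iff [CommRing 𝕜] [LinearOrder 𝕜] [IsOrderedRing 𝕜]
    {w y : Fin n → 𝕜} {t : 𝕜} :
    y ∈ Icc (t • outwardNormal w (-1 : Fin d → 𝕜)) (t • outwardNormal w (1 : Fin d → 𝕜)) ↔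
      (∀ i : Fin n, d ≤ (i : ℕ) → y i = w i * t) ∧
        ∀ i : Fin n, (i : ℕ) < d → |y i| ≤ w i * t := by
  rw [← pi_univ_Icc, mem_univ_pi, ← forall_and]
  refine forall_congr' fun i => ?_
  rcases lt_or_ge (i : ℕ) d with hi | hi
  · simp [outwardNormal_of_lt _ _ hi, hi, hi.not_ge, abs_le, mul_comm]
  · simp [outwardNormal_of_le _ _ hi, hi, hi.not_gt, mul_comm]

variable [Field 𝕜] [LinearOrder 𝕜] [IsStrictOrderedRing 𝕜]

theorem convexHull_range_outwardNormal_signVector {w : Fin n → 𝕜} (hw : ∀ i, 0 ≤ w i) :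
    convexHull 𝕜 (range fun s : Fin d → Bool => outwardNormal w (signVector 𝕜 s)) =
      Icc (outwardNormal w (-1 : Fin d → 𝕜)) (outwardNormal w (1 : Fin d → 𝕜)) := by
  rw [range_outwardNormal_signVector,
    convexHull_pi_pair (outwardNormal_mono hw (neg_le_self zero_le_one))]

theorem positive_hull_outward_normals_eq_general {w : Fin n → 𝕜} (hw : ∀ i, 0 ≤ w i) :
    {y : Fin n → 𝕜 | ∃ c : (Fin d → Bool) → 𝕜, (∀ s, 0 ≤ c s) ∧
        y = ∑ s, c s • outwardNormal w (signVector 𝕜 s)} =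
      {y : Fin n → 𝕜 | ∃ t : 𝕜, 0 ≤ t ∧
        (∀ i : Fin n, d ≤ (i : ℕ) → y i = w i * t) ∧
        (∀ i : Fin n, (i : ℕ) < d → |y i| ≤ w i * t)} := by
  ext y
  simp only [mem_ofPred_eq, exists_nonneg_eq_sum_smul_iff_exists_mem_smul_convexHull]
  refine exists_congr fun t => and_congr_right fun ht => ?_
  rw [convexHull_range_outwardNormal_signVector hw,
    smul_Icc_of_nonneg (outwardNormal_mono hw (neg_le_self zero_le_one)) ht,
    mem_Icc_smul_outwardNormal_iff]

end OutwardNormal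

/-- The positive hull of the `2^d` outward normal vectors
`v_j = ∑_{i≤d} j_i w_i e_i + ∑_{i>d} w_i e_i`, `j ∈ {−1,1}^d`, equals
`{y : ∃ t ≥ 0, y_i = w_i t for i > d and |y_i| ≤ w_i t for i ≤ d}`. -/
theorem positive_hull_outward_normals_eq
    (d r n : ℕ) (hd : 1 ≤ d) (hr : 1 ≤ r) (hn : n = d + r)
    (w : Fin n → ℝ) (hw : ∀ i, 0 < w i)
    (v : (Fin d → ℝ) → (Fin n → ℝ))
    (hv : ∀ j : Fin d → ℝ, v j =
      fun i : Fin n => if h : (i : ℕ) < d then j ⟨(i : ℕ), h⟩ * w i else w i) :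
    {y : Fin n → ℝ | ∃ c : (Fin d → Bool) → ℝ, (∀ s, 0 ≤ c s) ∧
        y = ∑ s : Fin d → Bool, c s • v (fun i => if s i then 1 else -1)} =
      {y : Fin n → ℝ | ∃ t : ℝ, 0 ≤ t ∧
        (∀ i : Fin n, d ≤ (i : ℕ) → y i = w i * t) ∧
        (∀ i : Fin n, (i : ℕ) < d → |y i| ≤ w i * t)} := by
  obtain rfl : v = outwardNormal w := funext hv
  exact positive_hull_outward_normals_eq_general fun i => (hw i).le
end

section
/- Define G(x) = (2/√π) ∫_0^x e^{−y²} dy and g(x) = (2/√π) e^{−x²} (so g = G'). Let C > 0, W > 0, and D₁, D₂ ≥ 0 with D₁ + D₂ > 0. Then the equation 2C − D₁ g(x)/(x G(x)) − D₂ W g(Wx)/(x G(Wx)) = 0 has exactly one solution x₀ in (0, ∞). -/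
/-- The error-function normalization `G(x) = (2/√π) ∫_0^x e^{−y²} dy`. -/
noncomputable def erfG (x : ℝ) : ℝ := (2 / Real.sqrt Real.pi) * ∫ y in (0:ℝ)..x, Real.exp (-y ^ 2)

/-- `g(x) = (2/√π) e^{−x²}`, the derivative of `erfG`. -/
noncomputable def erfg (x : ℝ) : ℝ := (2 / Real.sqrt Real.pi) * Real.exp (-x ^ 2)

/-!
With `Φ x = g x / (x * G x)`, the equation reads `D₁ * Φ x + D₂ * W ^ 2 * Φ (W * x) = 2 * C`. On
`(0, ∞)` the numerator of `Φ` decreases to `0`, while its denominator increases from `0` to `∞`.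
Thus `Φ` is continuous and decreases strictly from `∞` to `0`, and every nontrivial nonnegative
combination of rescalings of `Φ` inherits this, so it takes each positive value exactly once.
-/

open Filter Set Topology

section ScaledSums

lemma existsUnique_eq_of_injOn_Ioi {α β : Type*} [ConditionallyCompleteLinearOrder α]
    [TopologicalSpace α] [OrderTopology α] [DenselyOrdered α] [NoMaxOrder α] [LinearOrder β]
    [TopologicalSpace β] [OrderClosedTopology β] {f : α → β} {a : α} {l c : β}
    (hinj : InjOn f (Ioi a)) (hcont : ContinuousOn f (Ioi a))
    (hleft : Tendsto f (𝓝[>] a) atTop) (hright : Tendsto f atTop (𝓝 l)) (hc : l < c) :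
    ∃! x, a < x ∧ f x = c := by
  have : Nonempty α := ⟨a⟩
  obtain ⟨x, hx, hfx⟩ := isPreconnected_Ioi.intermediate_value_Ioi
    (le_principal_iff.2 (Ioi_mem_atTop a)) (le_principal_iff.2 self_mem_nhdsWithin)
    hcont hright hleft hc
  exact ⟨x, ⟨hx, hfx⟩, fun y ⟨hy, hfy⟩ ↦ hinj hy hx (hfy.trans hfx.symm)⟩

lemma lt_of_strictAntiOn_Ioi_of_tendsto {α β : Type*} [LinearOrder α] [NoMaxOrder α]
    [Preorder β] [TopologicalSpace β] [ClosedIicTopology β] {f : α → β} {a x : α} {l : β}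
    (hanti : StrictAntiOn f (Ioi a)) (hlim : Tendsto f atTop (𝓝 l)) (hx : a < x) : l < f x := by
  have : Nonempty α := ⟨a⟩
  obtain ⟨y, hxy⟩ := exists_gt x
  have hy : a < y := hx.trans hxy
  have hle : l ≤ f y := le_of_tendsto hlim <|
    (eventually_ge_atTop y).mono fun z hyz ↦ hanti.antitoneOn hy (hy.trans_le hyz) hyz
  exact hle.trans_lt (hanti hx hy hxy)

variable {ι : Type*} [Fintype ι] {f : ℝ → ℝ} {a w : ι → ℝ}

lemma strictAntiOn_sum_mul_comp_mul (hanti : StrictAntiOn f (Ioi 0))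
    (ha : ∀ i, 0 ≤ a i) (ha' : ∃ i, 0 < a i) (hw : ∀ i, 0 < w i) :
    StrictAntiOn (fun x ↦ ∑ i, a i * f (w i * x)) (Ioi 0) := by
  intro x hx y hy hxy
  have hlt (i : ι) : f (w i * y) < f (w i * x) :=
    hanti (mul_pos (hw i) hx) (mul_pos (hw i) hy) (mul_lt_mul_of_pos_left hxy (hw i))
  obtain ⟨i, hi⟩ := ha'
  exact Finset.sum_lt_sum (fun j _ ↦ mul_le_mul_of_nonneg_left (hlt j).le (ha j))
    ⟨i, Finset.mem_univ i, mul_lt_mul_of_pos_left (hlt i) hi⟩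

lemma continuousOn_sum_mul_comp_mul (hcont : ContinuousOn f (Ioi 0)) (hw : ∀ i, 0 < w i) :
    ContinuousOn (fun x ↦ ∑ i, a i * f (w i * x)) (Ioi 0) :=
  continuousOn_finsetSum _ fun i _ ↦ continuousOn_const.mul <|
    hcont.comp (continuous_const_mul (w i)).continuousOn fun _ hx ↦ mul_pos (hw i) hx

lemma tendsto_const_mul_nhdsGT_zero {r : ℝ} (hr : 0 < r) :
    Tendsto (fun x ↦ r * x) (𝓝[>] 0) (𝓝[>] 0) := by
  simpa only [mul_zero] using
    (continuous_const_mul r).continuousWithinAt.tendsto_nhdsWithin (s := Ioi 0) (x := 0)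
      (t := Ioi 0) fun x hx ↦ mul_pos hr hx

lemma tendsto_sum_mul_comp_mul_nhdsGT_zero (hleft : Tendsto f (𝓝[>] 0) atTop)
    (hf : ∀ x, 0 < x → 0 ≤ f x) (ha : ∀ i, 0 ≤ a i) (ha' : ∃ i, 0 < a i) (hw : ∀ i, 0 < w i) :
    Tendsto (fun x ↦ ∑ i, a i * f (w i * x)) (𝓝[>] 0) atTop := by
  obtain ⟨i, hi⟩ := ha'
  have hterm : Tendsto (fun x ↦ a i * f (w i * x)) (𝓝[>] 0) atTop :=
    (hleft.comp (tendsto_const_mul_nhdsGT_zero (hw i))).const_mul_atTop hi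
  refine tendsto_atTop_mono' _ (eventually_mem_nhdsWithin.mono fun x hx ↦ ?_) hterm
  exact Finset.single_le_sum (f := fun j ↦ a j * f (w j * x))
    (fun j _ ↦ mul_nonneg (ha j) (hf _ (mul_pos (hw j) hx))) (Finset.mem_univ i)

lemma tendsto_sum_mul_comp_mul_atTop (hright : Tendsto f atTop (𝓝 0)) (hw : ∀ i, 0 < w i) :
    Tendsto (fun x ↦ ∑ i, a i * f (w i * x)) atTop (𝓝 0) := by
  have hterm (i : ι) : Tendsto (fun x ↦ a i * f (w i * x)) atTop (𝓝 0) := by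
    have hscale : Tendsto (fun x ↦ w i * x) atTop atTop := tendsto_id.const_mul_atTop (hw i)
    simpa only [mul_zero] using! (hright.comp hscale).const_mul (a i)
  simpa only [Finset.sum_const_zero] using tendsto_finsetSum Finset.univ fun i _ ↦ hterm i

theorem existsUnique_sum_mul_comp_mul_eq {c : ℝ} (hanti : StrictAntiOn f (Ioi 0))
    (hcont : ContinuousOn f (Ioi 0)) (hleft : Tendsto f (𝓝[>] 0) atTop)
    (hright : Tendsto f atTop (𝓝 0)) (ha : ∀ i, 0 ≤ a i) (ha' : ∃ i, 0 < a i)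
    (hw : ∀ i, 0 < w i) (hc : 0 < c) :
    ∃! x, 0 < x ∧ ∑ i, a i * f (w i * x) = c := by
  have hf (x : ℝ) (hx : 0 < x) : 0 ≤ f x := (lt_of_strictAntiOn_Ioi_of_tendsto hanti hright hx).le
  exact existsUnique_eq_of_injOn_Ioi (strictAntiOn_sum_mul_comp_mul hanti ha ha' hw).injOn
    (continuousOn_sum_mul_comp_mul hcont hw)
    (tendsto_sum_mul_comp_mul_nhdsGT_zero hleft hf ha ha' hw)
    (tendsto_sum_mul_comp_mul_atTop hright hw) hc

end ScaledSums

section ErrorFunction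

lemma erfg_pos (x : ℝ) : 0 < erfg x := by
  unfold erfg
  positivity

lemma continuous_erfg : Continuous erfg := by
  unfold erfg
  fun_prop

lemma erfg_neg (x : ℝ) : erfg (-x) = erfg x := by
  simp only [erfg, neg_sq]

lemma antitoneOn_erfg : AntitoneOn erfg (Ici 0) := by
  intro x hx y _ hxy
  unfold erfg
  gcongr

lemma tendsto_erfg_atTop : Tendsto erfg atTop (𝓝 0) := by
  have hexp : Tendsto (fun x : ℝ ↦ Real.exp (-x ^ 2)) atTop (𝓝 0) :=
    Real.tendsto_exp_neg_atTop_nhds_zero.comp (tendsto_pow_atTop two_ne_zero)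
  simpa only [mul_zero] using! hexp.const_mul (2 / √Real.pi)

lemma hasDerivAt_erfG (x : ℝ) : HasDerivAt erfG (erfg x) x := by
  have hcont : Continuous fun y : ℝ ↦ Real.exp (-y ^ 2) := by fun_prop
  exact (hcont.integral_hasStrictDerivAt 0 x).hasDerivAt.const_mul _

lemma continuous_erfG : Continuous erfG :=
  continuous_iff_continuousAt.2 fun x ↦ (hasDerivAt_erfG x).continuousAt

lemma strictMono_erfG : StrictMono erfG :=
  strictMono_of_hasDerivAt_pos hasDerivAt_erfG erfg_pos

lemma erfG_zero : erfG 0 = 0 := by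
  simp only [erfG, intervalIntegral.integral_same, mul_zero]

lemma erfG_pos {x : ℝ} (hx : 0 < x) : 0 < erfG x :=
  erfG_zero ▸ strictMono_erfG hx

lemma erfG_neg (x : ℝ) : erfG (-x) = -erfG x := by
  have hint : ∫ y in (0 : ℝ)..-x, Real.exp (-y ^ 2) = -∫ y in (0 : ℝ)..x, Real.exp (-y ^ 2) :=
    calc
      ∫ y in (0 : ℝ)..-x, Real.exp (-y ^ 2) = ∫ y in (0 : ℝ)..-x, Real.exp (-(-y) ^ 2) := by
        simp only [neg_sq]
      _ = ∫ y in x..0, Real.exp (-y ^ 2) := by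
        rw [intervalIntegral.integral_comp_neg fun y ↦ Real.exp (-y ^ 2), neg_neg, neg_zero]
      _ = -∫ y in (0 : ℝ)..x, Real.exp (-y ^ 2) := intervalIntegral.integral_symm 0 x
  simp only [erfG, hint, mul_neg]

end ErrorFunction

section ErfQuotient

/-- The quotient `Φ(x) = g(x) / (x G(x))`, in terms of which the stationarity equation is a
combination of the rescalings `x ↦ Φ(w x)`. It has the junk value `0` at `x = 0`. -/
noncomputable def erfQuotient (x : ℝ) : ℝ := erfg x / (x * erfG x)

lemma erfQuotient_neg (x : ℝ) : erfQuotient (-x) = erfQuotient x := by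
  simp only [erfQuotient, erfg_neg, erfG_neg, neg_mul_neg]

lemma erfQuotient_abs_mul (w x : ℝ) :
    erfQuotient (|w| * x) = erfQuotient (w * x) := by
  rcases abs_choice w with hw | hw <;> simp only [hw, neg_mul, erfQuotient_neg]

lemma mul_erfg_div_eq_sq_mul_erfQuotient {w : ℝ} (hw : w ≠ 0) (x : ℝ) :
    w * erfg (w * x) / (x * erfG (w * x)) = w ^ 2 * erfQuotient (w * x) := by
  rw [erfQuotient, mul_assoc w x, ← mul_div_mul_left _ _ hw]
  ring

lemma strictAntiOn_erfQuotient : StrictAntiOn erfQuotient (Ioi 0) := by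
  intro x (hx : 0 < x) y (hy : 0 < y) hxy
  have hden : x * erfG x < y * erfG y :=
    mul_lt_mul'' hxy (strictMono_erfG hxy) hx.le (erfG_pos hx).le
  exact div_lt_div₀' (antitoneOn_erfg hx.le hy.le hxy.le) hden (erfg_pos x)
    (mul_pos hx (erfG_pos hx))

lemma continuousOn_erfQuotient : ContinuousOn erfQuotient (Ioi 0) :=
  continuous_erfg.continuousOn.div (continuous_id.mul continuous_erfG).continuousOn
    fun _ hx ↦ (mul_pos hx (erfG_pos hx)).ne'

lemma tendsto_erfQuotient_nhdsGT_zero : Tendsto erfQuotient (𝓝[>] 0) atTop := by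
  have hden : Tendsto (fun x ↦ x * erfG x) (𝓝[>] 0) (𝓝[>] 0) := by
    have hcont : Continuous fun x ↦ x * erfG x := continuous_id.mul continuous_erfG
    simpa only [zero_mul] using
      hcont.continuousWithinAt.tendsto_nhdsWithin (s := Ioi 0) (x := 0) (t := Ioi 0)
        fun x hx ↦ mul_pos hx (erfG_pos hx)
  exact (continuous_erfg.continuousWithinAt.tendsto).pos_mul_atTop (erfg_pos 0)
    hden.inv_tendsto_nhdsGT_zero

lemma tendsto_erfQuotient_atTop : Tendsto erfQuotient atTop (𝓝 0) := by
  have hlower : ∀ᶠ x in atTop, x * erfG 1 ≤ x * erfG x :=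
    (eventually_ge_atTop 1).mono fun x hx ↦
      mul_le_mul_of_nonneg_left (strictMono_erfG.monotone hx) (zero_le_one.trans hx)
  have hden : Tendsto (fun x ↦ x * erfG x) atTop atTop :=
    tendsto_atTop_mono' _ hlower (tendsto_id.atTop_mul_const (erfG_pos one_pos))
  exact tendsto_erfg_atTop.div_atTop hden

end ErfQuotient

theorem external_angle_stationary_point_unique_general {ι : Type*} [Fintype ι]
    (C : ℝ) (W D : ι → ℝ) (hC : 0 < C) (hW : ∀ i, W i ≠ 0)
    (hD : ∀ i, 0 ≤ D i) (hD' : 0 < ∑ i, D i) :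
    ∃! x : ℝ, 0 < x ∧
      2 * C - ∑ i, D i * W i * erfg (W i * x) / (x * erfG (W i * x)) = 0 := by
  obtain ⟨i₀, -, hi₀⟩ := (Finset.sum_pos_iff_of_nonneg fun i _ ↦ hD i).1 hD'
  have hterm (x : ℝ) (i : ι) : D i * W i * erfg (W i * x) / (x * erfG (W i * x)) =
      D i * W i ^ 2 * erfQuotient (|W i| * x) := by
    rw [mul_assoc, mul_div_assoc, mul_erfg_div_eq_sq_mul_erfQuotient (hW i), erfQuotient_abs_mul,
      mul_assoc]
  simp only [hterm, sub_eq_zero, eq_comm (a := 2 * C)]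
  exact existsUnique_sum_mul_comp_mul_eq strictAntiOn_erfQuotient continuousOn_erfQuotient
    tendsto_erfQuotient_nhdsGT_zero tendsto_erfQuotient_atTop
    (fun i ↦ mul_nonneg (hD i) (sq_nonneg _))
    ⟨i₀, mul_pos hi₀ (sq_pos_of_ne_zero (hW i₀))⟩
    (fun i ↦ abs_pos.2 (hW i)) (mul_pos two_pos hC)

/-- For `C > 0`, `W > 0`, `D₁, D₂ ≥ 0` with `D₁ + D₂ > 0`, the equation
`2C − D₁ g(x)/(x G(x)) − D₂ W g(Wx)/(x G(Wx)) = 0` has exactly one solution in `(0,∞)`. -/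
theorem external_angle_stationary_point_unique
    (C W D₁ D₂ : ℝ) (hC : 0 < C) (hW : 0 < W)
    (hD₁ : 0 ≤ D₁) (hD₂ : 0 ≤ D₂) (hD : 0 < D₁ + D₂) :
    ∃! x : ℝ, 0 < x ∧
      2 * C - D₁ * erfg x / (x * erfG x) - D₂ * W * erfg (W * x) / (x * erfG (W * x)) = 0 := by
  simpa [Fin.sum_univ_two, sub_sub] using
    external_angle_stationary_point_unique_general C ![1, W] ![D₁, D₂] hC
      (by simp [Fin.forall_fin_two, hW.ne']) (by simp [Fin.forall_fin_two, hD₁, hD₂])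
      (by simpa [Fin.sum_univ_two] using hD)
end

section
/- Let φ(s) = (1/√(2π)) e^{−s²/2} and Φ(s) = ∫_{−∞}^s φ(u) du be the standard Gaussian density and distribution function. Let t₁, t₂ > 0 and W > 0, and define b = (t₁ + W²t₂)/(t₁ + t₂), Q(s) = t₁φ(s)/((t₁+t₂)Φ(s)) + W t₂ φ(Ws)/((t₁+t₂)Φ(Ws)), and M̂(s) = −s/Q(s). Then for every c with 0 < c < 1/b, the equation M̂(s) = c has exactly one solution s* in (−∞, 0); in fact M̂ restricted to (−∞,0) is a strictly monotone bijection onto (0, 1/b), with M̂(s) → 0 as s → 0⁻ and M̂(s) → 1/b as s → −∞. -/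
open Filter Topology

/-- The standard Gaussian density `φ(s) = e^{−s²/2}/√(2π)`. -/
noncomputable def gaussPdf (s : ℝ) : ℝ := Real.exp (-s ^ 2 / 2) / Real.sqrt (2 * Real.pi)

/-- The standard Gaussian distribution function `Φ(s) = ∫_{−∞}^s φ(u) du`. -/
noncomputable def gaussCdf (s : ℝ) : ℝ := ∫ u in Set.Iic s, gaussPdf u

/-!
Let `m(s) = Φ(s)/φ(s)`. The substitution `u = s + w/s` in the integral defining `Φ(s)` gives, for
`s < 0`,
`-s m(s) = ∫₀^∞ exp(-w - (w/s)²/2) dw`,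
which is strictly decreasing on `(-∞, 0)` and tends to `∫₀^∞ e^{-w} dw = 1` as `s → -∞`.
On `(-∞, 0)`, `M̂(s)` is a constant multiple of the harmonic mean of `-s m(s)` and `-(Ws) m(Ws)`
with weights `t₁` and `W² t₂`, so it is strictly decreasing and its limit at `-∞` can be read off.
Since `Q` is continuous and positive on all of `ℝ`, `M̂` is continuous with `M̂(0) = 0`, and the
intermediate value theorem applies.
-/

open MeasureTheory Set

section General

theorem image_Iio_eq_Ioo_of_strictAntiOn {α β : Type*} [ConditionallyCompleteLinearOrder α]
    [TopologicalSpace α] [OrderTopology α] [DenselyOrdered α] [NoMinOrder α] [LinearOrder β]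
    [TopologicalSpace β] [OrderClosedTopology β] {f : α → β} {a : α} {l u : β}
    (hanti : StrictAntiOn f (Iio a)) (hcont : ContinuousOn f (Iio a))
    (hl : Tendsto f (𝓝[<] a) (𝓝 l)) (hu : Tendsto f atBot (𝓝 u)) :
    f '' Iio a = Ioo l u := by
  have : Nonempty α := ⟨a⟩
  refine Subset.antisymm ?_ (isPreconnected_Iio.intermediate_value_Ioo
    (le_principal_iff.2 self_mem_nhdsWithin) (le_principal_iff.2 (Iio_mem_atBot a)) hcont hl hu)
  rintro _ ⟨x, hx, rfl⟩
  obtain ⟨y, hxy, hya⟩ := exists_between (mem_Iio.1 hx)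
  obtain ⟨z, hzx⟩ := exists_lt x
  have l_le : l ≤ f y := le_of_tendsto hl <| by
    filter_upwards [Ioo_mem_nhdsLT hya] with w hw using (hanti hya hw.2 hw.1).le
  have le_u : f z ≤ u := ge_of_tendsto hu <| by
    filter_upwards [Iio_mem_atBot z] with w hw
    exact (hanti (hw.trans (hzx.trans hx)) (hzx.trans hx) hw).le
  exact ⟨l_le.trans_lt (hanti hx hya hxy), (hanti (hzx.trans hx) hx hzx).trans_le le_u⟩

theorem setIntegral_lt_setIntegral_of_forall_lt {α : Type*} [MeasurableSpace α] {μ : Measure α}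
    {s : Set α} {f g : α → ℝ} (hf : IntegrableOn f s μ) (hg : IntegrableOn g s μ)
    (hs : MeasurableSet s) (hμs : μ s ≠ 0) (hlt : ∀ x ∈ s, f x < g x) :
    ∫ x in s, f x ∂μ < ∫ x in s, g x ∂μ := by
  have support_inter : Function.support (g - f) ∩ s = s :=
    inter_eq_right.2 fun x hx => (sub_pos.2 (hlt x hx)).ne'
  have hsub_nonneg : 0 ≤ᵐ[μ.restrict s] g - f := by
    filter_upwards [ae_restrict_mem hs] with x hx using (sub_pos.2 (hlt x hx)).le
  rw [← sub_pos, ← integral_sub' hg hf,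
    setIntegral_pos_iff_support_of_nonneg_ae hsub_nonneg (hg.sub hf), support_inter]
  exact pos_iff_ne_zero.2 hμs

theorem setIntegral_Iic_eq_setIntegral_Ioi_comp_sub_left {E : Type*} [NormedAddCommGroup E]
    [NormedSpace ℝ E] (f : ℝ → E) (a : ℝ) : ∫ u in Iic a, f u = ∫ v in Ioi 0, f (a - v) := by
  rw [integral_Iic_eq_integral_Iio,
    ← (volume.measurePreserving_sub_left a).setIntegral_preimage_emb
      (Homeomorph.subLeft a).measurableEmbedding, preimage_const_sub_Iio, sub_self]

end General

section Gaussian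

theorem gaussPdf_pos (s : ℝ) : 0 < gaussPdf s := by
  unfold gaussPdf
  positivity

theorem continuous_gaussPdf : Continuous gaussPdf := by
  unfold gaussPdf
  fun_prop

theorem gaussPdf_eq_gaussianPDFReal : gaussPdf = ProbabilityTheory.gaussianPDFReal 0 1 := by
  ext s
  simp [gaussPdf, ProbabilityTheory.gaussianPDFReal, div_eq_inv_mul]

theorem integrable_gaussPdf : Integrable gaussPdf :=
  gaussPdf_eq_gaussianPDFReal ▸ ProbabilityTheory.integrable_gaussianPDFReal 0 1

theorem gaussPdf_sub (s v : ℝ) :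
    gaussPdf (s - v) = gaussPdf s * Real.exp (s * v - v ^ 2 / 2) := by
  rw [gaussPdf, gaussPdf, div_mul_eq_mul_div, ← Real.exp_add]
  ring_nf

theorem gaussCdf_pos (s : ℝ) : 0 < gaussCdf s := by
  have h := setIntegral_lt_setIntegral_of_forall_lt (s := Iic s) (μ := volume)
    integrableOn_zero integrable_gaussPdf.integrableOn measurableSet_Iic (by simp)
    fun u _ => gaussPdf_pos u
  simpa [gaussCdf] using h

theorem continuous_gaussCdf : Continuous gaussCdf :=
  continuous_iff_continuousAt.2 fun s =>
    integrable_gaussPdf.integrableOn.continuousOn_Iic_primitive_Iic.continuousAt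
      (Iic_mem_nhds (lt_add_one s))

/-- The ratio `Φ/φ`, which at `s` is the Mills ratio `(1 - Φ)/φ` of the standard Gaussian
at `-s`. -/
noncomputable def gaussMills (s : ℝ) : ℝ := gaussCdf s / gaussPdf s

theorem gaussMills_pos (s : ℝ) : 0 < gaussMills s := div_pos (gaussCdf_pos s) (gaussPdf_pos s)

theorem continuous_gaussMills : Continuous gaussMills :=
  continuous_gaussCdf.div continuous_gaussPdf fun s => (gaussPdf_pos s).ne'

theorem gaussMills_eq_integral (s : ℝ) :
    gaussMills s = ∫ v in Ioi 0, Real.exp (s * v - v ^ 2 / 2) := by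
  rw [gaussMills, gaussCdf, setIntegral_Iic_eq_setIntegral_Ioi_comp_sub_left]
  simp_rw [gaussPdf_sub, integral_const_mul]
  exact mul_div_cancel_left₀ _ (gaussPdf_pos s).ne'

/-- The Mills ratio `Φ/φ` divided by its asymptotic equivalent `-1/s` at `-∞`. -/
noncomputable def scaledGaussMills (s : ℝ) : ℝ := -s * gaussMills s

theorem scaledGaussMills_pos {s : ℝ} (hs : s < 0) : 0 < scaledGaussMills s :=
  mul_pos (neg_pos.2 hs) (gaussMills_pos s)

theorem scaledGaussMills_eq_integral {s : ℝ} (hs : s < 0) :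
    scaledGaussMills s = ∫ w in Ioi 0, Real.exp (-w - (w / s) ^ 2 / 2) := by
  have h := integral_comp_mul_left_Ioi' (fun w => Real.exp (-w - (w / s) ^ 2 / 2)) 0 (neg_pos.2 hs)
  have integrand_comp (v : ℝ) : -(-s * v) - (-s * v / s) ^ 2 / 2 = s * v - v ^ 2 / 2 := by
    have := hs.ne
    field_simp
  simp_rw [integrand_comp, mul_zero] at h
  rw [scaledGaussMills, gaussMills_eq_integral, ← h, smul_eq_mul]

theorem norm_exp_neg_sub_div_sq_le (s w : ℝ) :
    ‖Real.exp (-w - (w / s) ^ 2 / 2)‖ ≤ Real.exp (-w) := by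
  rw [Real.norm_eq_abs, Real.abs_exp, Real.exp_le_exp]
  exact sub_le_self _ (by positivity)

theorem integrableOn_exp_neg_sub_div_sq (s : ℝ) :
    IntegrableOn (fun w => Real.exp (-w - (w / s) ^ 2 / 2)) (Ioi 0) :=
  (integrableOn_exp_neg_Ioi 0).mono' (by fun_prop)
    (.of_forall (norm_exp_neg_sub_div_sq_le s))

theorem strictAntiOn_scaledGaussMills : StrictAntiOn scaledGaussMills (Iio 0) := by
  intro s hs s' hs' hss'
  rw [scaledGaussMills_eq_integral hs, scaledGaussMills_eq_integral hs']
  refine setIntegral_lt_setIntegral_of_forall_lt (integrableOn_exp_neg_sub_div_sq s')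
    (integrableOn_exp_neg_sub_div_sq s) measurableSet_Ioi (by simp) fun w (hw : 0 < w) => ?_
  have hsq_lt : s' ^ 2 < s ^ 2 := by
    rwa [sq_lt_sq, abs_of_neg hs', abs_of_neg hs, neg_lt_neg_iff]
  have hsq_pos : 0 < s' ^ 2 := sq_pos_of_neg hs'
  simp_rw [div_pow]
  gcongr

theorem tendsto_scaledGaussMills_atBot : Tendsto scaledGaussMills atBot (𝓝 1) := by
  have integrand_tendsto (w : ℝ) :
      Tendsto (fun s => Real.exp (-w - (w / s) ^ 2 / 2)) atBot (𝓝 (Real.exp (-w))) := by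
    have h : Tendsto (fun s => w / s) atBot (𝓝 0) := tendsto_const_nhds.div_atBot tendsto_id
    simpa using (((h.pow 2).div_const 2).const_sub (-w)).rexp
  have integral_tendsto :
      Tendsto (fun s => ∫ w in Ioi 0, Real.exp (-w - (w / s) ^ 2 / 2)) atBot (𝓝 1) := by
    rw [← integral_exp_neg_Ioi_zero]
    exact tendsto_integral_filter_of_dominated_convergence (fun w => Real.exp (-w))
      (.of_forall fun s => by fun_prop)
      (.of_forall fun s => .of_forall (norm_exp_neg_sub_div_sq_le s))
      (integrableOn_exp_neg_Ioi 0) (.of_forall integrand_tendsto)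
  refine integral_tendsto.congr' ?_
  filter_upwards [eventually_lt_atBot 0] with s hs using (scaledGaussMills_eq_integral hs).symm

end Gaussian

section InternalAngle

/-- The function `M̂(s) = -s/Q(s)` of the internal angle exponent, with `Q` written in terms of the
Mills ratio `Φ/φ`. -/
noncomputable def internalAngleRatio (t₁ t₂ W s : ℝ) : ℝ :=
  -s / ((t₁ / gaussMills s + W * t₂ / gaussMills (W * s)) / (t₁ + t₂))

-- At `s = 0` both sides are `0`, the right-hand one because `x / 0 = 0`.
theorem internalAngleRatio_eq_div_scaledGaussMills (t₁ t₂ W s : ℝ) :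
    internalAngleRatio t₁ t₂ W s =
      (t₁ + t₂) / (t₁ / scaledGaussMills s + W ^ 2 * t₂ / scaledGaussMills (W * s)) := by
  have denom_eq : t₁ / scaledGaussMills s + W ^ 2 * t₂ / scaledGaussMills (W * s) =
      (t₁ / gaussMills s + W * t₂ / gaussMills (W * s)) / -s := by
    have := (gaussMills_pos s).ne'
    have := (gaussMills_pos (W * s)).ne'
    unfold scaledGaussMills
    field_simp
    ring
  rw [denom_eq, internalAngleRatio, div_div_eq_mul_div, div_div_eq_mul_div, mul_comm]

variable {t₁ t₂ W : ℝ}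

theorem continuous_internalAngleRatio (ht₁ : 0 < t₁) (ht₂ : 0 < t₂) (hW : 0 < W) :
    Continuous (internalAngleRatio t₁ t₂ W) := by
  have mills_ne (s : ℝ) : gaussMills s ≠ 0 := (gaussMills_pos s).ne'
  have mills_cont := continuous_gaussMills
  have denom_ne (s : ℝ) :
      (t₁ / gaussMills s + W * t₂ / gaussMills (W * s)) / (t₁ + t₂) ≠ 0 := by
    have := gaussMills_pos s
    have := gaussMills_pos (W * s)
    positivity
  unfold internalAngleRatio
  fun_prop (disch := simp [*])

theorem strictAntiOn_internalAngleRatio (ht₁ : 0 < t₁) (ht₂ : 0 < t₂) (hW : 0 < W) :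
    StrictAntiOn (internalAngleRatio t₁ t₂ W) (Iio 0) := by
  intro s (hs : s < 0) s' (hs' : s' < 0) hss'
  have hWs : W * s < 0 := mul_neg_of_pos_of_neg hW hs
  have hWs' : W * s' < 0 := mul_neg_of_pos_of_neg hW hs'
  have := scaledGaussMills_pos hs
  have := scaledGaussMills_pos hs'
  have := scaledGaussMills_pos hWs
  have := scaledGaussMills_pos hWs'
  have mills_lt := strictAntiOn_scaledGaussMills hs hs' hss'
  have mills_mul_lt := strictAntiOn_scaledGaussMills hWs hWs' (by gcongr)
  simp only [internalAngleRatio_eq_div_scaledGaussMills]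
  gcongr

theorem tendsto_internalAngleRatio_nhdsLT_zero (ht₁ : 0 < t₁) (ht₂ : 0 < t₂) (hW : 0 < W) :
    Tendsto (internalAngleRatio t₁ t₂ W) (𝓝[<] 0) (𝓝 0) := by
  have h := (continuous_internalAngleRatio ht₁ ht₂ hW).tendsto 0
  rw [internalAngleRatio, neg_zero, zero_div] at h
  exact h.mono_left nhdsWithin_le_nhds

theorem tendsto_internalAngleRatio_atBot (ht₁ : 0 < t₁) (ht₂ : 0 < t₂) (hW : 0 < W) :
    Tendsto (internalAngleRatio t₁ t₂ W) atBot (𝓝 ((t₁ + t₂) / (t₁ + W ^ 2 * t₂))) := by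
  have mills_mul_tendsto : Tendsto (fun s => scaledGaussMills (W * s)) atBot (𝓝 1) :=
    tendsto_scaledGaussMills_atBot.comp (tendsto_id.const_mul_atBot hW)
  have harmonic_tendsto : Tendsto (fun s =>
      (t₁ + t₂) / (t₁ / scaledGaussMills s + W ^ 2 * t₂ / scaledGaussMills (W * s)))
      atBot (𝓝 ((t₁ + t₂) / (t₁ / 1 + W ^ 2 * t₂ / 1))) :=
    tendsto_const_nhds.div ((tendsto_const_nhds.div tendsto_scaledGaussMills_atBot one_ne_zero).add
      (tendsto_const_nhds.div mills_mul_tendsto one_ne_zero)) (by positivity)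
  rw [div_one, div_one] at harmonic_tendsto
  exact harmonic_tendsto.congr fun s =>
    (internalAngleRatio_eq_div_scaledGaussMills t₁ t₂ W s).symm

end InternalAngle

/-- with `b = (t₁ + W²t₂)/(t₁+t₂)`,
`Q(s) = t₁φ(s)/((t₁+t₂)Φ(s)) + Wt₂φ(Ws)/((t₁+t₂)Φ(Ws))` and `M̂(s) = −s/Q(s)`,
the map `M̂` restricted to `(−∞,0)` is a strictly monotone (decreasing) bijection onto
`(0, 1/b)`, with `M̂(s) → 0` as `s → 0⁻`, `M̂(s) → 1/b` as `s → −∞`; in particular for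
every `c ∈ (0, 1/b)` the equation `M̂(s) = c` has exactly one solution `s* < 0`. -/
theorem internal_angle_stationary_point_unique
    (t₁ t₂ W : ℝ) (ht₁ : 0 < t₁) (ht₂ : 0 < t₂) (hW : 0 < W)
    (b : ℝ) (hb : b = (t₁ + W ^ 2 * t₂) / (t₁ + t₂))
    (Q : ℝ → ℝ)
    (hQ : ∀ s, Q s = t₁ * gaussPdf s / ((t₁ + t₂) * gaussCdf s)
        + W * t₂ * gaussPdf (W * s) / ((t₁ + t₂) * gaussCdf (W * s)))
    (Mhat : ℝ → ℝ) (hM : ∀ s, Mhat s = -s / Q s) :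
    StrictAntiOn Mhat (Set.Iio 0) ∧
    Mhat '' Set.Iio 0 = Set.Ioo 0 (1 / b) ∧
    Tendsto Mhat (𝓝[<] 0) (𝓝 0) ∧
    Tendsto Mhat atBot (𝓝 (1 / b)) ∧
    ∀ c : ℝ, 0 < c → c < 1 / b → ∃! s : ℝ, s < 0 ∧ Mhat s = c := by
  have Mhat_eq : Mhat = internalAngleRatio t₁ t₂ W := by
    ext s
    rw [hM, hQ, internalAngleRatio, gaussMills, gaussMills, add_div, div_div_eq_mul_div,
      div_div_eq_mul_div, div_div, div_div, mul_comm (gaussCdf s), mul_comm (gaussCdf (W * s))]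
  have inv_b : 1 / b = (t₁ + t₂) / (t₁ + W ^ 2 * t₂) := by rw [hb, one_div_div]
  rw [Mhat_eq, inv_b]
  have hanti := strictAntiOn_internalAngleRatio ht₁ ht₂ hW
  have hzero := tendsto_internalAngleRatio_nhdsLT_zero ht₁ ht₂ hW
  have hbot := tendsto_internalAngleRatio_atBot ht₁ ht₂ hW
  have himage := image_Iio_eq_Ioo_of_strictAntiOn hanti
    (continuous_internalAngleRatio ht₁ ht₂ hW).continuousOn hzero hbot
  refine ⟨hanti, himage, hzero, hbot, fun c hc hcb => ?_⟩
  obtain ⟨s, hs, hsc⟩ := himage.ge ⟨hc, hcb⟩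
  exact ⟨s, ⟨hs, hsc⟩, fun s' hs' => hanti.injOn hs'.1 hs (hs'.2.trans hsc.symm)⟩
end
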